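/- Let G ∈ ℂ^{r×m}, let c > 0 be a real number, and let X ∈ ℂ^{m×s} (s ≤ m) be semi-unitary, i.e., XᴴX = I_s. Then det(I_r + c·G X Xᴴ Gᴴ) ≤ ∏_{i=1}^{s} (1 + c·λ_i(Gᴴ G)). Moreover, equality holds if (Gᴴ G) X = X D where D is the diagonal matrix with diagonal entries λ_1(GᴴG), …, λ_s(GᴴG), i.e., when the columns of X are orthonormal eigenvectors of GᴴG associated with its s largest eigenvalues (equivalently, dominant right singular vectors of G). -/

import Mathlib

open Matrix
open scoped ComplexOrder

theorem aux_one_le_det {n : Type*} [Fintype n] [DecidableEq n] {P : Matrix n n ℂ}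
    (hP : P.PosSemidef) : 1 ≤ (1 + P).det := by
  have h := hP.1.spectral_theorem
  set U := hP.1.eigenvectorUnitary
  have hU1 : (U : Matrix n n ℂ) * star (U : Matrix n n ℂ) = 1 := Unitary.coe_mul_star_self U
  have hU2 : star (U : Matrix n n ℂ) * (U : Matrix n n ℂ) = 1 := Unitary.coe_star_mul_self U
  have h2 : 1 + P = (U : Matrix n n ℂ) *
      (diagonal (fun i => 1 + (hP.1.eigenvalues i : ℂ))) * star (U : Matrix n n ℂ) := by
    have : diagonal (fun i => 1 + (hP.1.eigenvalues i : ℂ))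
        = 1 + diagonal (RCLike.ofReal ∘ hP.1.eigenvalues) := by
      rw [← diagonal_one, diagonal_add]; rfl
    rw [this, mul_add, add_mul, mul_one, hU1]
    conv_lhs => rw [h, Unitary.conjStarAlgAut_apply]
  rw [h2, det_mul, mul_comm, det_mul, ← mul_assoc, ← det_mul, hU2, det_one, one_mul,
    det_diagonal]
  have h3 : (1 : ℝ) ≤ ∏ i, (1 + hP.1.eigenvalues i) := by
    have h4 : ∏ i : n, (1 : ℝ) ≤ ∏ i, (1 + hP.1.eigenvalues i) :=
      Finset.prod_le_prod (fun _ _ => zero_le_one) fun i _ => by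
        linarith [hP.eigenvalues_nonneg i]
    rwa [Finset.prod_const_one] at h4
  exact_mod_cast h3

open scoped MatrixOrder in
theorem aux_det_mono {n : Type*} [Fintype n] [DecidableEq n] {A B : Matrix n n ℂ}
    (hA : A.PosDef) (hB : (B - A).PosSemidef) : A.det ≤ B.det := by
  obtain ⟨C, hC⟩ := CStarAlgebra.nonneg_iff_eq_star_mul_self.1 (Matrix.nonneg_iff_posSemidef.2 hB)
  rw [star_eq_conjTranspose] at hC
  have hu : IsUnit A.det := (Matrix.isUnit_iff_isUnit_det A).1 hA.isUnit
  have h1 : B = A * (1 + (A⁻¹ * Cᴴ) * C) := by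
    rw [mul_add, mul_one, ← mul_assoc, ← mul_assoc, mul_nonsing_inv A hu, one_mul, ← hC]
    abel
  rw [h1, det_mul, det_one_add_mul_comm]
  have h2 : 1 ≤ (1 + C * (A⁻¹ * Cᴴ)).det := by
    apply aux_one_le_det
    rw [← mul_assoc]
    exact hA.inv.posSemidef.mul_mul_conjTranspose_same C
  exact le_mul_of_one_le_right hA.det_pos.le h2

theorem aux_main {m s : ℕ} (d : Fin m → ℝ) (t : ℝ) (ht : 0 < t)
    (Y : Matrix (Fin m) (Fin s) ℂ) (hY : Yᴴ * Y = 1) 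
    (hpd : (Yᴴ * diagonal (fun i => (d i : ℂ)) * Y).PosDef) :
    (Yᴴ * diagonal (fun i => (d i : ℂ)) * Y).det ≤
      ((t ^ s * ∏ j, max (d j / t) 1 : ℝ) : ℂ) := by
  set w : Fin m → ℝ := fun j => Real.sqrt (max (d j / t) 1 - 1) with hw
  have hw2 : ∀ j, w j * w j = max (d j / t) 1 - 1 := fun j =>
    Real.mul_self_sqrt (by linarith [le_max_right (d j / t) 1])
  set W : Matrix (Fin m) (Fin m) ℂ := diagonal (fun i => (w i : ℂ)) with hW
  have hWH : Wᴴ = W := by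
    rw [hW, diagonal_conjTranspose]; congr 1; ext i; simp
  have hWW : W * W = diagonal (fun i => ((max (d i / t) 1 - 1 : ℝ) : ℂ)) := by
    rw [hW, diagonal_mul_diagonal]; congr 1; ext i; rw [← hw2]; push_cast; rfl
  have step1 : (Yᴴ * diagonal (fun i => (d i : ℂ)) * Y).det ≤
      ((t : ℂ) • (1 + (Yᴴ * W) * (W * Y))).det := by
    apply aux_det_mono hpd
    have : (t : ℂ) • (1 + (Yᴴ * W) * (W * Y)) - Yᴴ * diagonal (fun i => (d i : ℂ)) * Y
        = Yᴴ * diagonal (fun i => ((t * max (d i / t) 1 - d i : ℝ) : ℂ)) * Y := by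
      have e : diagonal (fun i => ((t * max (d i / t) 1 - d i : ℝ) : ℂ))
          = (t : ℂ) • (1 + W * W) - diagonal (fun i => (d i : ℂ)) := by
        rw [hWW, ← diagonal_one, diagonal_add, ← diagonal_smul, diagonal_sub]
        congr 1; ext i; simp
      rw [e, ← hY]
      simp only [Matrix.mul_sub, Matrix.sub_mul, Matrix.mul_add, Matrix.add_mul, Matrix.mul_smul,
        Matrix.smul_mul, Matrix.mul_one, Matrix.mul_assoc]
    rw [this]
    apply PosSemidef.conjTranspose_mul_mul_same
    rw [posSemidef_diagonal_iff]
    intro i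
    have : d i ≤ t * max (d i / t) 1 := by
      calc d i = t * (d i / t) := by field_simp
        _ ≤ _ := by gcongr; exact le_max_left _ _
    exact_mod_cast sub_nonneg.2 this
  have hP : (1 - Y * Yᴴ).PosSemidef := by
    have : 1 - Y * Yᴴ = (1 - Y * Yᴴ)ᴴ * (1 - Y * Yᴴ) := by
      have h : Y * Yᴴ * (Y * Yᴴ) = Y * Yᴴ := by
        rw [Matrix.mul_assoc, ← Matrix.mul_assoc Yᴴ, hY, Matrix.one_mul]
      simp only [conjTranspose_sub, conjTranspose_one, conjTranspose_mul, conjTranspose_conjTranspose]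
      rw [sub_mul, one_mul, mul_sub, mul_one, h]
      simp
    rw [this]
    exact posSemidef_conjTranspose_mul_self _
  have step2 : (1 + (Yᴴ * W) * (W * Y)).det ≤ (1 + W * W).det := by
    rw [det_one_add_mul_comm]
    apply aux_det_mono
    · apply PosDef.one.add_posSemidef
      have := posSemidef_self_mul_conjTranspose (W * Y)
      rwa [conjTranspose_mul, hWH] at this
    · have := hP.mul_mul_conjTranspose_same W
      rw [hWH] at this
      convert this using 1
      simp only [Matrix.mul_sub, Matrix.sub_mul, Matrix.mul_one, Matrix.mul_assoc]
      abel
  have e3 : (1 + W * W).det = ((∏ j, max (d j / t) 1 : ℝ) : ℂ) := by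
    rw [hWW, ← diagonal_one, diagonal_add, det_diagonal]
    simp
  rw [e3] at step2
  refine step1.trans ?_
  rw [det_smul, Fintype.card_fin]
  push_cast at step2 ⊢
  refine mul_le_mul_of_nonneg_left step2 ?_
  exact_mod_cast (pow_pos ht s).le

/-- **Optimal equivalent baseband precoder (equation (6)).**
Let `G : ℂ^{r×m}`, `c > 0`, and let `X : ℂ^{m×s}` (`s ≤ m`) be semi-unitary
(`XᴴX = 1`).  Let `μ` enumerate the eigenvalues of `GᴴG` in decreasing order with
multiplicity.  Then `det(1 + c·G X Xᴴ Gᴴ)` is real and at most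
`∏_{i<s} (1 + c·μ i)`, with equality when `(GᴴG) X = X D` for
`D = diag(μ 0, …, μ (s-1))`, i.e. when the columns of `X` are orthonormal
eigenvectors of `GᴴG` for its `s` largest eigenvalues. -/
theorem det_one_add_smul_outer_le
    {r m s : ℕ} (hs : s ≤ m)
    (G : Matrix (Fin r) (Fin m) ℂ) (c : ℝ) (hc : 0 < c)
    (μ : Fin m → ℝ) (hμ_dec : Antitone μ)
    (hμ_eig : ∃ σ : Equiv.Perm (Fin m), ∀ i,
      μ i = (Matrix.posSemidef_conjTranspose_mul_self G).isHermitian.eigenvalues (σ i))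
    (X : Matrix (Fin m) (Fin s) ℂ) (hX : Xᴴ * X = 1) :
    ((1 + (c : ℂ) • (G * X * Xᴴ * Gᴴ)).det.im = 0)
    ∧ ((1 + (c : ℂ) • (G * X * Xᴴ * Gᴴ)).det.re
        ≤ ∏ i : Fin s, (1 + c * μ (Fin.castLE hs i)))
    ∧ ((Gᴴ * G) * X = X * Matrix.diagonal (fun i : Fin s => (μ (Fin.castLE hs i) : ℂ)) →
        (1 + (c : ℂ) • (G * X * Xᴴ * Gᴴ)).det.re
          = ∏ i : Fin s, (1 + c * μ (Fin.castLE hs i))) := by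
  obtain ⟨σ, hσ⟩ := hμ_eig
  have hps := posSemidef_conjTranspose_mul_self G
  set hH := hps.isHermitian with hHdef
  have hμ0 : ∀ i, 0 ≤ μ i := fun i => by
    rw [hσ]; exact hps.eigenvalues_nonneg _
  have hsyl : (1 + (c : ℂ) • (G * X * Xᴴ * Gᴴ)).det
      = (1 + (c : ℂ) • (Xᴴ * (Gᴴ * G) * X)).det := by
    have := det_one_add_mul_comm ((c : ℂ) • (G * X)) (Xᴴ * Gᴴ)
    simpa only [Matrix.smul_mul, Matrix.mul_smul, Matrix.mul_assoc] using this
  have hpd : (1 + (c : ℂ) • (Xᴴ * (Gᴴ * G) * X)).PosDef := by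
    apply PosDef.one.add_posSemidef
    exact (hps.conjTranspose_mul_mul_same X).smul (by exact_mod_cast hc.le)
  rw [hsyl]
  refine ⟨?_, ?_, ?_⟩
  · exact (Complex.lt_def.1 hpd.det_pos).2.symm
  · rcases Nat.eq_zero_or_pos s with rfl | hspos
    · simp
    set U : Matrix (Fin m) (Fin m) ℂ := (hH.eigenvectorUnitary : Matrix (Fin m) (Fin m) ℂ) with hU
    have hUU : U * Uᴴ = 1 := Unitary.coe_mul_star_self hH.eigenvectorUnitary
    have hspec : Gᴴ * G = U * diagonal (fun i => (hH.eigenvalues i : ℂ)) * Uᴴ := by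
      conv_lhs => rw [hH.spectral_theorem, Unitary.conjStarAlgAut_apply]
      rfl
    set d : Fin m → ℝ := fun i => 1 + c * hH.eigenvalues i with hd
    have hY : (Uᴴ * X)ᴴ * (Uᴴ * X) = 1 := by
      rw [conjTranspose_mul, conjTranspose_conjTranspose, Matrix.mul_assoc, ← Matrix.mul_assoc U,
        hUU, Matrix.one_mul, hX]
    have hdm : diagonal (fun i => (d i : ℂ))
        = 1 + (c : ℂ) • diagonal (fun i => (hH.eigenvalues i : ℂ)) := by
      rw [← diagonal_one, ← diagonal_smul, diagonal_add]
      congr 1; ext i; simp [hd]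
    have heq : (1 + (c : ℂ) • (Xᴴ * (Gᴴ * G) * X))
        = (Uᴴ * X)ᴴ * diagonal (fun i => (d i : ℂ)) * (Uᴴ * X) := by
      rw [hdm, Matrix.mul_add, Matrix.add_mul, Matrix.mul_one, hY]
      conv_lhs => rw [hspec]
      simp only [conjTranspose_mul, conjTranspose_conjTranspose, Matrix.smul_mul, Matrix.mul_smul,
        Matrix.mul_assoc]
    set l : Fin s := ⟨s - 1, by omega⟩ with hl
    set t : ℝ := 1 + c * μ (Fin.castLE hs l) with ht
    have ht0 : 0 < t := by have := mul_nonneg hc.le (hμ0 (Fin.castLE hs l)); linarith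
    have key := aux_main d t ht0 (Uᴴ * X) hY (heq ▸ hpd)
    rw [← heq] at key
    have key2 := (Complex.le_def.1 key).1
    rw [Complex.ofReal_re] at key2
    refine key2.trans (le_of_eq ?_)
    rw [← Equiv.prod_comp σ]
    have hdσ : ∀ i, d (σ i) = 1 + c * μ i := fun i => by rw [hσ]
    simp_rw [hdσ]
    have hprod : ∏ i : Fin m, max ((1 + c * μ i) / t) 1
        = ∏ i : Fin s, ((1 + c * μ (Fin.castLE hs i)) / t) := by
      symm
      have h1 : ∀ i : Fin s, (1 + c * μ (Fin.castLE hs i)) / t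
          = max ((1 + c * μ (Fin.castLE hs i)) / t) 1 := fun i => by
        symm
        apply max_eq_left
        rw [le_div_iff₀ ht0, one_mul, ht]
        have : μ (Fin.castLE hs l) ≤ μ (Fin.castLE hs i) := hμ_dec (by
          rw [Fin.le_def]; simp [hl]; omega)
        gcongr
      rw [Finset.prod_congr rfl fun i _ => h1 i]
      refine Finset.prod_of_injOn (Fin.castLE hs) (Fin.castLE_injective hs).injOn (by simp) ?_
        (by simp)
      intro i _ hi
      apply max_eq_right
      rw [div_le_one ht0, ht]
      have : μ i ≤ μ (Fin.castLE hs l) := hμ_dec (by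
        rw [Fin.le_def]
        by_contra hlt
        apply hi
        refine ⟨⟨i, ?_⟩, by simp, by ext; simp⟩
        simp [hl] at hlt
        omega)
      gcongr
    rw [hprod, Finset.prod_div_distrib, Finset.prod_const, Finset.card_univ, Fintype.card_fin]
    field_simp
  · intro h
    rw [Matrix.mul_assoc, h, ← Matrix.mul_assoc, hX, Matrix.one_mul, ← diagonal_one,
      ← diagonal_smul, diagonal_add, det_diagonal]
    have : ∏ i : Fin s, ((1 : ℂ) + ((c : ℂ) • fun i : Fin s => (μ (Fin.castLE hs i) : ℂ)) i)
      = ((∏ i : Fin s, (1 + c * μ (Fin.castLE hs i)) : ℝ) : ℂ) := by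
      push_cast; rfl
    rw [this, Complex.ofReal_re]
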